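/- (Inversion formula for the Lévy measure, formula (1).) Let −∞ < a < b < ∞ with U({a}) = U({b}) = 0. Then ∫_{[a,b]} ((x − sin x)/x) U(dx) = (1/(4π)) · lim_{R→∞} ∫_{−R}^{R} ρ̂(z) · (∫_a^b e^{−izx} dx) dz, where (x − sin x)/x is interpreted as 0 at x = 0. -/

import Mathlib

open MeasureTheory Filter Asymptotics

/-!
Averaging `ψ(z) - ψ(z + t)` over the symmetric window `t ∈ [-1, 1]` annihilates both the drift and
the compensator `i z x h(x)`, turns the Gaussian part into the constant `σ² / 3`, and multiplies
`e^{izx}` by `2 (1 - sin x / x)`. Hence `ρ̂` is twice the Fourier transform of the measure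
`(1 - sin x / x) U(dx)`, which is finite because `1 - sin x / x = O(min (1, x²))`. The claim is then
Lévy's inversion formula for this finite measure: by Fubini the truncated integral is the integral
of a difference of sine integrals, which is bounded and converges to `2π` times the indicator of
`[a, b]` off the two endpoints, thanks to `∫₀^∞ sin x / x dx = π / 2`.
-/

noncomputable section

open Set Function
open scoped Topology

/-! ### The sine integral -/

/-- The sine integral `Si(T) = ∫₀ᵀ (sin x / x) dx`. Its values are the building blocks of the
truncated Fourier inversion kernel. -/
def sineIntegral (T : ℝ) : ℝ := ∫ x in (0 : ℝ)..T, Real.sinc x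

lemma integral_exp_neg_mul_Ioi_zero {x : ℝ} (hx : 0 < x) :
    ∫ s in Ioi (0 : ℝ), Real.exp (-x * s) = x⁻¹ := by
  rw [integral_exp_mul_Ioi (neg_lt_zero.2 hx), mul_zero, Real.exp_zero, neg_div_neg_eq, one_div]

lemma integral_exp_neg_mul_mul_sin (s T : ℝ) :
    ∫ x in (0 : ℝ)..T, Real.exp (-x * s) * Real.sin x =
      (1 + s ^ 2)⁻¹ - Real.exp (-T * s) * (Real.cos T + s * Real.sin T) * (1 + s ^ 2)⁻¹ := by
  have hderiv (x : ℝ) : HasDerivAt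
      (fun x ↦ -(Real.exp (-x * s) * (Real.cos x + s * Real.sin x) * (1 + s ^ 2)⁻¹))
      (Real.exp (-x * s) * Real.sin x) x := by
    have hexp : HasDerivAt (fun x ↦ Real.exp (-x * s)) (Real.exp (-x * s) * (-1 * s)) x :=
      ((hasDerivAt_neg x).mul_const s).exp
    have htrig : HasDerivAt (fun x ↦ Real.cos x + s * Real.sin x)
        (-Real.sin x + s * Real.cos x) x :=
      (Real.hasDerivAt_cos x).add ((Real.hasDerivAt_sin x).const_mul s)
    refine ((hexp.mul htrig).mul_const (1 + s ^ 2)⁻¹).neg.congr_deriv ?_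
    field_simp
    ring
  rw [intervalIntegral.integral_eq_sub_of_hasDerivAt (fun x _ ↦ hderiv x)
    (Continuous.intervalIntegrable (by fun_prop) _ _)]
  simp only [neg_zero, zero_mul, Real.exp_zero, Real.cos_zero, Real.sin_zero, mul_zero, add_zero]
  ring

lemma integrable_exp_neg_mul_mul_sin (T : ℝ) :
    Integrable (uncurry fun x s : ℝ ↦ Real.exp (-x * s) * Real.sin x)
      ((volume.restrict (Ioc 0 T)).prod (volume.restrict (Ioi (0 : ℝ)))) := by
  rw [integrable_prod_iff (Continuous.aestronglyMeasurable (by fun_prop))]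
  constructor
  · filter_upwards [ae_restrict_mem measurableSet_Ioc] with x hx
    exact (exp_neg_integrableOn_Ioi 0 hx.1).mul_const (Real.sin x)
  · have hsinc : IntegrableOn (fun x ↦ |Real.sinc x|) (Ioc 0 T) :=
      Real.continuous_sinc.abs.integrableOn_Ioc
    refine hsinc.congr ?_
    filter_upwards [ae_restrict_mem measurableSet_Ioc] with x hx
    simp only [uncurry_apply_pair, norm_mul, Real.norm_eq_abs, Real.abs_exp]
    rw [integral_mul_const, integral_exp_neg_mul_Ioi_zero hx.1, Real.sinc_of_ne_zero hx.1.ne',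
      abs_div, abs_of_pos hx.1, inv_mul_eq_div]

lemma sineIntegral_eq_integral_Ioi {T : ℝ} (hT : 0 ≤ T) :
    sineIntegral T = ∫ s in Ioi (0 : ℝ),
      ((1 + s ^ 2)⁻¹ - Real.exp (-T * s) * (Real.cos T + s * Real.sin T) * (1 + s ^ 2)⁻¹) := by
  calc sineIntegral T
      = ∫ x in Ioc 0 T, ∫ s in Ioi (0 : ℝ), Real.exp (-x * s) * Real.sin x := by
        rw [sineIntegral, intervalIntegral.integral_of_le hT]
        refine setIntegral_congr_fun measurableSet_Ioc fun x hx ↦ ?_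
        simp only [integral_mul_const, integral_exp_neg_mul_Ioi_zero hx.1,
          Real.sinc_of_ne_zero hx.1.ne', inv_mul_eq_div]
    _ = ∫ s in Ioi (0 : ℝ), ∫ x in Ioc 0 T, Real.exp (-x * s) * Real.sin x :=
        integral_integral_swap (integrable_exp_neg_mul_mul_sin T)
    _ = _ := by
        simp_rw [← intervalIntegral.integral_of_le hT, integral_exp_neg_mul_mul_sin]

lemma abs_exp_mul_cos_add_mul_sin_le (T s : ℝ) :
    |Real.exp (-T * s) * (Real.cos T + s * Real.sin T) * (1 + s ^ 2)⁻¹| ≤ Real.exp (-T * s) := by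
  have hsq : (Real.cos T + s * Real.sin T) ^ 2 ≤ (1 + s ^ 2) ^ 2 := by
    nlinarith [Real.sin_sq_add_cos_sq T, sq_nonneg (Real.sin T - s * Real.cos T), sq_nonneg s,
      sq_nonneg (s ^ 2)]
  have hratio : |Real.cos T + s * Real.sin T| * (1 + s ^ 2)⁻¹ ≤ 1 :=
    mul_inv_le_one_of_le₀ (abs_le_of_sq_le_sq hsq (by positivity)) (by positivity)
  rw [abs_mul, abs_mul, Real.abs_exp, abs_of_pos (by positivity : 0 < (1 + s ^ 2)⁻¹), mul_assoc]
  exact mul_le_of_le_one_right (Real.exp_nonneg _) hratio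

lemma abs_sineIntegral_sub_pi_div_two_le {T : ℝ} (hT : 0 < T) :
    |sineIntegral T - Real.pi / 2| ≤ T⁻¹ := by
  set err : ℝ → ℝ := fun s ↦
    Real.exp (-T * s) * (Real.cos T + s * Real.sin T) * (1 + s ^ 2)⁻¹
  have hexp : IntegrableOn (fun s ↦ Real.exp (-T * s)) (Ioi 0) := exp_neg_integrableOn_Ioi 0 hT
  have hle : ∀ᵐ s ∂volume.restrict (Ioi 0), ‖err s‖ ≤ Real.exp (-T * s) :=
    .of_forall (abs_exp_mul_cos_add_mul_sin_le T)
  have herr_int : IntegrableOn err (Ioi 0) :=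
    hexp.mono' (Measurable.aestronglyMeasurable (by fun_prop)) hle
  have hdiff : sineIntegral T - Real.pi / 2 = -∫ s in Ioi (0 : ℝ), err s := by
    rw [sineIntegral_eq_integral_Ioi hT.le,
      integral_sub integrable_inv_one_add_sq.integrableOn herr_int, integral_Ioi_inv_one_add_sq,
      Real.arctan_zero]
    ring
  rw [hdiff, abs_neg, ← integral_exp_neg_mul_Ioi_zero hT]
  exact norm_integral_le_of_norm_le hexp hle

lemma sineIntegral_neg (T : ℝ) : sineIntegral (-T) = -sineIntegral T := by
  have hsub := intervalIntegral.integral_comp_neg (a := 0) (b := T) Real.sinc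
  simp only [Real.sinc_neg, neg_zero] at hsub
  rw [sineIntegral, sineIntegral, hsub, intervalIntegral.integral_symm]

lemma continuous_sineIntegral : Continuous sineIntegral :=
  intervalIntegral.continuous_primitive
    (fun _ _ ↦ Real.continuous_sinc.intervalIntegrable _ _) 0

lemma tendsto_sineIntegral_atTop : Tendsto sineIntegral atTop (𝓝 (Real.pi / 2)) := by
  rw [tendsto_iff_norm_sub_tendsto_zero]
  refine squeeze_zero' (.of_forall fun _ ↦ norm_nonneg _) ?_ tendsto_inv_atTop_zero
  filter_upwards [eventually_gt_atTop 0] with T hT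
  exact abs_sineIntegral_sub_pi_div_two_le hT

lemma tendsto_sineIntegral_atBot : Tendsto sineIntegral atBot (𝓝 (-(Real.pi / 2))) := by
  simpa only [comp_def, sineIntegral_neg, neg_neg] using
    (tendsto_sineIntegral_atTop.comp tendsto_neg_atBot_atTop).neg

lemma abs_sineIntegral_le (T : ℝ) : |sineIntegral T| ≤ 3 := by
  wlog hT : 0 ≤ T generalizing T
  · simpa only [sineIntegral_neg, abs_neg] using this (-T) (by linarith)
  rcases le_total T 1 with hT1 | hT1
  · have hle : ‖sineIntegral T‖ ≤ 1 * |T - 0| :=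
      intervalIntegral.norm_integral_le_of_norm_le_const fun x _ ↦ Real.abs_sinc_le_one x
    rw [Real.norm_eq_abs, sub_zero, one_mul, abs_of_nonneg hT] at hle
    linarith
  · have hnear := abs_le.1 (abs_sineIntegral_sub_pi_div_two_le (zero_lt_one.trans_le hT1))
    have hinv : T⁻¹ ≤ 1 := inv_le_one_of_one_le₀ hT1
    exact abs_le.2 ⟨by linarith [Real.pi_pos], by linarith [Real.pi_le_four]⟩

/-! ### Truncated Fourier inversion -/

/-- The kernel `2 (Si(R (x - a)) - Si(R (x - b)))` obtained by applying Fourier inversion truncated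
to `[-R, R]` to the indicator of `[a, b]`; as `R → ∞` it tends to `2π` inside `[a, b]` and to `0`
outside. -/
def inversionKernel (a b R x : ℝ) : ℝ :=
  2 * (sineIntegral (R * (x - a)) - sineIntegral (R * (x - b)))

lemma continuous_inversionKernel (a b R : ℝ) : Continuous (inversionKernel a b R) := by
  have := continuous_sineIntegral
  unfold inversionKernel
  fun_prop

lemma abs_inversionKernel_le (a b R x : ℝ) : |inversionKernel a b R x| ≤ 12 := by
  have ha := abs_le.1 (abs_sineIntegral_le (R * (x - a)))
  have hb := abs_le.1 (abs_sineIntegral_le (R * (x - b)))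
  rw [inversionKernel, abs_le]
  constructor <;> linarith

lemma tendsto_sineIntegral_mul_of_pos {c : ℝ} (hc : 0 < c) :
    Tendsto (fun R : ℝ ↦ sineIntegral (R * c)) atTop (𝓝 (Real.pi / 2)) :=
  tendsto_sineIntegral_atTop.comp (tendsto_id.atTop_mul_const hc)

lemma tendsto_sineIntegral_mul_of_neg {c : ℝ} (hc : c < 0) :
    Tendsto (fun R : ℝ ↦ sineIntegral (R * c)) atTop (𝓝 (-(Real.pi / 2))) :=
  tendsto_sineIntegral_atBot.comp (tendsto_id.atTop_mul_const_of_neg hc)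

lemma tendsto_inversionKernel {a b x : ℝ} (hab : a ≤ b) (hxa : x ≠ a) (hxb : x ≠ b) :
    Tendsto (fun R ↦ inversionKernel a b R x) atTop
      (𝓝 ((Icc a b).indicator (fun _ ↦ 2 * Real.pi) x)) := by
  unfold inversionKernel
  rcases lt_or_gt_of_ne hxa with hlt_a | hgt_a
  · rw [indicator_of_notMem fun hx ↦ hx.1.not_gt hlt_a]
    simpa using ((tendsto_sineIntegral_mul_of_neg (sub_neg.2 hlt_a)).sub
      (tendsto_sineIntegral_mul_of_neg (sub_neg.2 (hlt_a.trans_le hab)))).const_mul 2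
  rcases lt_or_gt_of_ne hxb with hlt_b | hgt_b
  · rw [indicator_of_mem (show x ∈ Icc a b from ⟨hgt_a.le, hlt_b.le⟩)]
    convert ((tendsto_sineIntegral_mul_of_pos (sub_pos.2 hgt_a)).sub
      (tendsto_sineIntegral_mul_of_neg (sub_neg.2 hlt_b))).const_mul 2 using 2
    ring
  · rw [indicator_of_notMem fun hx ↦ hx.2.not_gt hgt_b]
    simpa using ((tendsto_sineIntegral_mul_of_pos (sub_pos.2 hgt_a)).sub
      (tendsto_sineIntegral_mul_of_pos (sub_pos.2 hgt_b))).const_mul 2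

lemma norm_cexp_I_mul_mul (z x : ℝ) : ‖Complex.exp (Complex.I * z * x)‖ = 1 := by
  rw [mul_assoc, ← Complex.ofReal_mul, Complex.norm_exp_I_mul_ofReal]

lemma integral_cexp_I_mul_mul_eq_sinc (r x : ℝ) :
    ∫ t in (-r)..r, Complex.exp (Complex.I * t * x) = (2 * (r * Real.sinc (r * x)) : ℝ) := by
  rcases eq_or_ne x 0 with rfl | hx
  · simp [two_mul]
  have hscale := intervalIntegral.integral_comp_mul_right (a := -r) (b := r)
    (fun t : ℝ ↦ Complex.exp (t * Complex.I)) hx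
  have hx' : (x : ℂ) ≠ 0 := by exact_mod_cast hx
  rw [neg_mul, integral_exp_mul_I_eq_sinc] at hscale
  convert hscale using 1
  · refine intervalIntegral.integral_congr fun t _ ↦ congrArg Complex.exp ?_
    push_cast
    ring
  · rw [Complex.real_smul]
    push_cast
    field_simp

lemma integral_cexp_mul_integral_cexp_eq_inversionKernel (a b R x : ℝ) :
    ∫ z in (-R)..R, Complex.exp (Complex.I * z * x) *
      ∫ y in a..b, Complex.exp (-(Complex.I * (z : ℂ) * (y : ℂ))) = inversionKernel a b R x := by
  have hcont : Continuous (uncurry fun z y : ℝ ↦ Complex.exp (Complex.I * z * x) *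
      Complex.exp (-(Complex.I * (z : ℂ) * (y : ℂ)))) := by
    fun_prop
  have hint : IntegrableOn (uncurry fun z y : ℝ ↦ Complex.exp (Complex.I * z * x) *
      Complex.exp (-(Complex.I * (z : ℂ) * (y : ℂ)))) (uIoc (-R) R ×ˢ uIoc a b) :=
    (hcont.continuousOn.integrableOn_compact (isCompact_uIcc.prod isCompact_uIcc)).mono_set
      (prod_mono uIoc_subset_uIcc uIoc_subset_uIcc)
  have hinner (y : ℝ) : ∫ z in (-R)..R, Complex.exp (Complex.I * z * x) *
      Complex.exp (-(Complex.I * (z : ℂ) * (y : ℂ))) =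
        (2 * (R * Real.sinc (R * x - R * y)) : ℝ) := by
    rw [← mul_sub, ← integral_cexp_I_mul_mul_eq_sinc]
    refine intervalIntegral.integral_congr fun z _ ↦ ?_
    simp only [← Complex.exp_add]
    push_cast
    ring_nf
  simp_rw [← intervalIntegral.integral_const_mul]
  rw [intervalIntegral_intervalIntegral_swap hint]
  simp_rw [hinner]
  rw [intervalIntegral.integral_ofReal, intervalIntegral.integral_const_mul,
    intervalIntegral.integral_const_mul, intervalIntegral.mul_integral_comp_sub_mul,
    inversionKernel, sineIntegral, sineIntegral, intervalIntegral.integral_interval_sub_left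
      (Real.continuous_sinc.intervalIntegrable _ _) (Real.continuous_sinc.intervalIntegrable _ _),
    mul_sub, mul_sub]

section Inversion

variable {μ : Measure ℝ} {g : ℝ → ℂ} {a b : ℝ}

lemma integral_fourier_mul_eq_integral_inversionKernel [SFinite μ] (hg : Integrable g μ)
    (a b R : ℝ) :
    ∫ z in (-R)..R, (∫ x, Complex.exp (Complex.I * z * x) * g x ∂μ) *
        ∫ y in a..b, Complex.exp (-(Complex.I * (z : ℂ) * (y : ℂ))) =
      ∫ x, (inversionKernel a b R x : ℂ) * g x ∂μ := by
  set K : ℝ → ℂ := fun z ↦ ∫ y in a..b, Complex.exp (-(Complex.I * (z : ℂ) * (y : ℂ)))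
  have hK : Continuous K :=
    intervalIntegral.continuous_parametric_intervalIntegral_of_continuous' (by fun_prop) a b
  have hint : Integrable (uncurry fun z x : ℝ ↦ Complex.exp (Complex.I * z * x) * g x * K z)
      ((volume.restrict (uIoc (-R) R)).prod μ) := by
    have hK_int : Integrable K (volume.restrict (uIoc (-R) R)) := hK.integrableOn_uIoc
    have hprod := (hK_int.mul_prod hg).bdd_mul (c := 1)
      (f := fun p : ℝ × ℝ ↦ Complex.exp (Complex.I * p.1 * p.2))
      (Continuous.aestronglyMeasurable (by fun_prop))
      (.of_forall fun p ↦ (norm_cexp_I_mul_mul p.1 p.2).le)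
    refine hprod.congr (.of_forall fun p ↦ ?_)
    simp only [uncurry_def]
    ring
  simp_rw [← integral_mul_const]
  rw [intervalIntegral_integral_swap hint]
  refine integral_congr_ae (.of_forall fun x ↦ ?_)
  simp only [← integral_cexp_mul_integral_cexp_eq_inversionKernel,
    ← intervalIntegral.integral_mul_const]
  exact intervalIntegral.integral_congr fun z _ ↦ mul_right_comm _ _ _

lemma tendsto_integral_inversionKernel_mul (hg : Integrable g μ) (hab : a ≤ b)
    (ha : μ {a} = 0) (hb : μ {b} = 0) :
    Tendsto (fun R ↦ ∫ x, (inversionKernel a b R x : ℂ) * g x ∂μ) atTop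
      (𝓝 (2 * Real.pi * ∫ x in Icc a b, g x ∂μ)) := by
  have hlim : 2 * Real.pi * ∫ x in Icc a b, g x ∂μ =
      ∫ x, (((Icc a b).indicator (fun _ ↦ 2 * Real.pi) x : ℝ) : ℂ) * g x ∂μ := by
    rw [← integral_const_mul, ← integral_indicator measurableSet_Icc]
    refine integral_congr_ae (.of_forall fun x ↦ ?_)
    by_cases hx : x ∈ Icc a b <;> simp [hx]
  have hxa : ∀ᵐ x ∂μ, x ≠ a := by simpa [ae_iff] using ha
  have hxb : ∀ᵐ x ∂μ, x ≠ b := by simpa [ae_iff] using hb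
  rw [hlim]
  refine tendsto_integral_filter_of_dominated_convergence (fun x ↦ 12 * ‖g x‖) ?_ ?_
    (hg.norm.const_mul 12) ?_
  · refine .of_forall fun R ↦ AEStronglyMeasurable.mul ?_ hg.aestronglyMeasurable
    exact (Complex.continuous_ofReal.comp (continuous_inversionKernel a b R)).aestronglyMeasurable
  · refine .of_forall fun R ↦ .of_forall fun x ↦ ?_
    rw [norm_mul, Complex.norm_real]
    gcongr
    exact abs_inversionKernel_le a b R x
  · filter_upwards [hxa, hxb] with x hxa hxb
    exact ((Complex.continuous_ofReal.tendsto _).comp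
      (tendsto_inversionKernel hab hxa hxb)).mul_const _

theorem tendsto_integral_fourier_mul [SFinite μ] (hg : Integrable g μ) (hab : a ≤ b)
    (ha : μ {a} = 0) (hb : μ {b} = 0) :
    Tendsto (fun R : ℝ ↦ ∫ z in (-R)..R, (∫ x, Complex.exp (Complex.I * z * x) * g x ∂μ) *
        ∫ y in a..b, Complex.exp (-(Complex.I * (z : ℂ) * (y : ℂ)))) atTop
      (𝓝 (2 * Real.pi * ∫ x in Icc a b, g x ∂μ)) := by
  simpa only [integral_fourier_mul_eq_integral_inversionKernel hg] using
    tendsto_integral_inversionKernel_mul hg hab ha hb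

end Inversion

/-! ### Lévy–Khintchine integrals -/

lemma sFinite_of_lintegral_ne_top {α : Type*} [MeasurableSpace α] {μ : Measure α}
    {f : α → ENNReal} (hf : AEMeasurable f μ) (hne : ∀ᵐ x ∂μ, f x ≠ 0)
    (hfin : ∫⁻ x, f x ∂μ ≠ ⊤) : SFinite μ := by
  have hlt : ∀ᵐ x ∂μ, f x ≠ ⊤ := (ae_lt_top' hf hfin).mono fun _ hx ↦ hx.ne
  have := isFiniteMeasure_withDensity hfin
  rw [← withDensity_inv_same₀ hf hne hlt]
  infer_instance

lemma integrable_min_one_sq {μ : Measure ℝ}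
    (hfin : ∫⁻ x, ENNReal.ofReal (min 1 (x ^ 2)) ∂μ < ⊤) :
    Integrable (fun x : ℝ ↦ min 1 (x ^ 2)) μ := by
  refine ⟨Continuous.aestronglyMeasurable (by fun_prop), ?_⟩
  rwa [hasFiniteIntegral_iff_ofReal (.of_forall fun x ↦ by positivity)]

lemma abs_one_sub_sinc_le (x : ℝ) : |1 - Real.sinc x| ≤ 2 * min 1 (x ^ 2) := by
  wlog hx : 0 ≤ x generalizing x
  · simpa only [Real.sinc_neg, neg_sq] using this (-x) (by linarith)
  rw [abs_of_nonneg (sub_nonneg.2 (Real.sinc_le_one x))]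
  have hsq : 1 - Real.sinc x ≤ x ^ 2 / 6 := by
    rcases hx.eq_or_lt with rfl | hx0
    · simp
    rw [Real.sinc_of_ne_zero hx0.ne', sub_le_comm, le_div_iff₀ hx0]
    linarith [Real.sin_gt_sub_cube hx0]
  rw [mul_min_of_nonneg _ _ zero_le_two]
  exact le_min (by linarith [Real.neg_one_le_sinc x]) (by linarith [sq_nonneg x])

lemma integrable_one_sub_sinc {μ : Measure ℝ} (hμ : Integrable (fun x : ℝ ↦ min 1 (x ^ 2)) μ) :
    Integrable (fun x ↦ 1 - Real.sinc x) μ :=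
  (hμ.const_mul 2).mono' (continuous_const.sub Real.continuous_sinc).aestronglyMeasurable
    (.of_forall abs_one_sub_sinc_le)

/-- Truncation functions for the Lévy–Khintchine formula. Near `0` only `h x - 1 = O(x)` is asked
for, which is what makes the compensated integrand `O(x²)` there. -/
structure IsTruncationFunction (h : ℝ → ℝ) : Prop where
  measurable : Measurable h
  isBigO_sub_one : (fun x ↦ h x - 1) =O[𝓝 0] fun x ↦ x
  bounded_mul : ∃ C, ∀ x, |x * h x| ≤ C

/-- The integrand `e^{izx} - 1 - i z x h(x)` of the Lévy–Khintchine formula with truncation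
function `h`. -/
def levyKernel (h : ℝ → ℝ) (z x : ℝ) : ℂ :=
  Complex.exp (Complex.I * z * x) - 1 - Complex.I * z * x * h x

/-- The cumulant function with characteristic triplet `(γ, σ, U)` relative to the truncation
function `h`; the second parameter is the standard deviation `σ`, not the variance `σ²`. -/
def levyCumulant (γ σ : ℝ) (U : Measure ℝ) (h : ℝ → ℝ) (z : ℝ) : ℂ :=
  Complex.I * γ * z - (σ : ℂ) ^ 2 * (z : ℂ) ^ 2 / 2 + ∫ x, levyKernel h z x ∂U

lemma norm_cexp_I_mul_sub_one_sub_le (u : ℝ) :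
    ‖Complex.exp (Complex.I * u) - 1 - Complex.I * u‖ ≤ 2 * u ^ 2 := by
  have hnorm : ‖Complex.I * u‖ = |u| := by simp
  rcases le_total |u| 1 with hu | hu
  · have hle := Complex.norm_exp_sub_one_sub_id_le (hnorm.trans_le hu)
    rw [hnorm, sq_abs] at hle
    linarith [sq_nonneg u]
  · have hexp : ‖Complex.exp (Complex.I * u) - 1‖ ≤ |u| := Real.norm_exp_I_mul_ofReal_sub_one_le
    calc ‖Complex.exp (Complex.I * u) - 1 - Complex.I * u‖ ≤ |u| + |u| :=
          (norm_sub_le _ _).trans (add_le_add hexp hnorm.le)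
      _ ≤ 2 * |u| ^ 2 := by nlinarith
      _ = 2 * u ^ 2 := by rw [sq_abs]

section LevyKernel

variable {h : ℝ → ℝ}

lemma norm_levyKernel_le_two_add (h : ℝ → ℝ) (z x : ℝ) :
    ‖levyKernel h z x‖ ≤ 2 + |z| * |x * h x| := by
  have hcomp : ‖Complex.I * z * x * h x‖ = |z| * |x * h x| := by
    simp [abs_mul, mul_assoc]
  calc ‖levyKernel h z x‖
      ≤ ‖Complex.exp (Complex.I * z * x)‖ + ‖(1 : ℂ)‖ + ‖Complex.I * z * x * h x‖ :=
        (norm_sub_le _ _).trans (add_le_add_left (norm_sub_le _ _) _)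
    _ = 2 + |z| * |x * h x| := by
        rw [norm_cexp_I_mul_mul, norm_one, hcomp]
        ring

lemma norm_levyKernel_le_mul_sq {c x : ℝ} (hx : |h x - 1| ≤ c * |x|) (z : ℝ) :
    ‖levyKernel h z x‖ ≤ (2 * |z| ^ 2 + c * |z|) * x ^ 2 := by
  have hsplit : levyKernel h z x =
      (Complex.exp (Complex.I * (z * x : ℝ)) - 1 - Complex.I * (z * x : ℝ)) -
        Complex.I * (z * x * (h x - 1) : ℝ) := by
    simp only [levyKernel]
    push_cast
    ring_nf
  have hcomp : ‖Complex.I * (z * x * (h x - 1) : ℝ)‖ ≤ |z| * |x| * (c * |x|) := by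
    rw [norm_mul, Complex.norm_I, one_mul, Complex.norm_real, Real.norm_eq_abs, abs_mul, abs_mul]
    gcongr
  calc ‖levyKernel h z x‖ ≤ 2 * (z * x) ^ 2 + |z| * |x| * (c * |x|) := by
        rw [hsplit]
        exact (norm_sub_le _ _).trans (add_le_add (norm_cexp_I_mul_sub_one_sub_le _) hcomp)
    _ = (2 * |z| ^ 2 + c * |z|) * x ^ 2 := by
        rw [mul_pow, ← sq_abs z, ← sq_abs x]
        ring

lemma IsTruncationFunction.exists_norm_levyKernel_le (hh : IsTruncationFunction h) :
    ∃ D, ∀ z x, ‖levyKernel h z x‖ ≤ D * (1 + |z|) ^ 2 * min 1 (x ^ 2) := by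
  obtain ⟨C, hC⟩ := hh.bounded_mul
  have hC0 : 0 ≤ C := (abs_nonneg _).trans (hC 0)
  obtain ⟨c, hc0, hc⟩ := hh.isBigO_sub_one.exists_pos
  obtain ⟨δ, hδ, hnear⟩ := Metric.eventually_nhds_iff.1 hc.bound
  obtain ⟨d, hd0, hd1, hdδ⟩ : ∃ d, 0 < d ∧ d ≤ 1 ∧ d ≤ δ :=
    ⟨min δ 1, lt_min hδ one_pos, min_le_right _ _, min_le_left _ _⟩
  refine ⟨(2 + c) + (2 + C) / d ^ 2, fun z x ↦ ?_⟩
  have hz := abs_nonneg z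
  rcases lt_or_ge |x| d with hx | hx
  · have hx1 : x ^ 2 ≤ 1 := (sq_le_one_iff_abs_le_one x).2 (hx.le.trans hd1)
    have hhx : |h x - 1| ≤ c * |x| :=
      hnear (by simpa [Real.dist_eq] using hx.trans_le hdδ)
    rw [min_eq_right hx1]
    calc ‖levyKernel h z x‖ ≤ (2 * |z| ^ 2 + c * |z|) * x ^ 2 := norm_levyKernel_le_mul_sq hhx z
      _ ≤ (2 + c) * (1 + |z|) ^ 2 * x ^ 2 := by
        gcongr
        nlinarith [mul_nonneg hc0.le hz, mul_nonneg hc0.le (sq_nonneg |z|)]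
      _ ≤ ((2 + c) + (2 + C) / d ^ 2) * (1 + |z|) ^ 2 * x ^ 2 := by
        gcongr ?_ * _ * _
        exact le_add_of_nonneg_right (by positivity)
  · have hmin : d ^ 2 ≤ min 1 (x ^ 2) := by
      rw [← sq_abs x]
      exact le_min (pow_le_one₀ hd0.le hd1) (by gcongr)
    calc ‖levyKernel h z x‖ ≤ 2 + |z| * |x * h x| := norm_levyKernel_le_two_add h z x
      _ ≤ 2 + |z| * C := by
        gcongr
        exact hC x
      _ ≤ (2 + C) * (1 + |z|) ^ 2 := by
        nlinarith [mul_nonneg hC0 hz, mul_nonneg hC0 (sq_nonneg |z|)]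
      _ = (2 + C) / d ^ 2 * (1 + |z|) ^ 2 * d ^ 2 := by field_simp
      _ ≤ ((2 + c) + (2 + C) / d ^ 2) * (1 + |z|) ^ 2 * min 1 (x ^ 2) := by
        gcongr ?_ * _ * ?_
        exact le_add_of_nonneg_left (by positivity)

lemma integral_levyKernel_sub (h : ℝ → ℝ) (z x : ℝ) :
    ∫ t in (-1 : ℝ)..1, (levyKernel h z x - levyKernel h (z + t) x) =
      2 * (Complex.exp (Complex.I * z * x) * (1 - Real.sinc x : ℝ)) := by
  have hdiff (t : ℝ) : levyKernel h z x - levyKernel h (z + t) x =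
      Complex.exp (Complex.I * z * x) -
        Complex.exp (Complex.I * z * x) * Complex.exp (Complex.I * t * x) +
          (t : ℂ) * (Complex.I * x * h x) := by
    simp only [levyKernel, ← Complex.exp_add]
    push_cast
    ring_nf
  simp_rw [hdiff]
  rw [intervalIntegral.integral_add, intervalIntegral.integral_sub,
    intervalIntegral.integral_const, intervalIntegral.integral_const_mul,
    integral_cexp_I_mul_mul_eq_sinc, intervalIntegral.integral_mul_const,
    intervalIntegral.integral_ofReal, integral_id]
  · simp only [Complex.real_smul, one_mul]
    push_cast
    ring
  all_goals exact Continuous.intervalIntegrable (by fun_prop) _ _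

variable {U : Measure ℝ}

lemma IsTruncationFunction.integrable_levyKernel (hh : IsTruncationFunction h)
    (hU : Integrable (fun x : ℝ ↦ min 1 (x ^ 2)) U) (z : ℝ) : Integrable (levyKernel h z) U := by
  obtain ⟨D, hD⟩ := hh.exists_norm_levyKernel_le
  refine (hU.const_mul (D * (1 + |z|) ^ 2)).mono' (Measurable.aestronglyMeasurable ?_)
    (.of_forall (hD z))
  have := hh.measurable
  unfold levyKernel
  fun_prop

lemma IsTruncationFunction.integrable_levyKernel_comp [SFinite U] (hh : IsTruncationFunction h)
    (hU : Integrable (fun x : ℝ ↦ min 1 (x ^ 2)) U) {φ : ℝ → ℝ} (hφ : Continuous φ) (c d : ℝ) :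
    Integrable (uncurry fun t ↦ levyKernel h (φ t)) ((volume.restrict (uIoc c d)).prod U) := by
  obtain ⟨D, hD⟩ := hh.exists_norm_levyKernel_le
  have hweight : Continuous fun t ↦ D * (1 + |φ t|) ^ 2 := by fun_prop
  refine ((hweight.integrableOn_uIoc (a := c) (b := d)).integrable.mul_prod hU).mono'
    (Measurable.aestronglyMeasurable ?_) (.of_forall fun p ↦ hD (φ p.1) p.2)
  have := hh.measurable
  have := hφ.measurable
  simp only [levyKernel, uncurry_def]
  fun_prop

lemma IsTruncationFunction.integrable_levyKernel_sub [SFinite U] (hh : IsTruncationFunction h)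
    (hU : Integrable (fun x : ℝ ↦ min 1 (x ^ 2)) U) (z c d : ℝ) :
    Integrable (uncurry fun t x : ℝ ↦ levyKernel h z x - levyKernel h (z + t) x)
      ((volume.restrict (uIoc c d)).prod U) :=
  (hh.integrable_levyKernel_comp hU continuous_const c d).sub
    (hh.integrable_levyKernel_comp hU (continuous_const_add z) c d)

lemma levyCumulant_sub (hh : IsTruncationFunction h)
    (hU : Integrable (fun x : ℝ ↦ min 1 (x ^ 2)) U) (γ σ z t : ℝ) :
    levyCumulant γ σ U h z - levyCumulant γ σ U h (z + t) =
      (t * (-Complex.I * γ + (σ : ℂ) ^ 2 * z) + (t ^ 2 : ℝ) * ((σ : ℂ) ^ 2 / 2)) +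
        ∫ x, (levyKernel h z x - levyKernel h (z + t) x) ∂U := by
  rw [integral_sub (hh.integrable_levyKernel hU z) (hh.integrable_levyKernel hU (z + t)),
    levyCumulant, levyCumulant]
  push_cast
  ring

theorem integral_levyCumulant_sub [SFinite U] (hh : IsTruncationFunction h)
    (hU : Integrable (fun x : ℝ ↦ min 1 (x ^ 2)) U) (γ σ z : ℝ) :
    ∫ t in (-1 : ℝ)..1, (levyCumulant γ σ U h z - levyCumulant γ σ U h (z + t)) =
      2 * ∫ x, Complex.exp (Complex.I * z * x) * (1 - Real.sinc x : ℝ) ∂U + (σ : ℂ) ^ 2 / 3 := by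
  have hint := hh.integrable_levyKernel_sub hU z (-1) 1
  have houter : IntervalIntegrable
      (fun t ↦ ∫ x, (levyKernel h z x - levyKernel h (z + t) x) ∂U) volume (-1) 1 :=
    intervalIntegrable_iff.2 hint.integral_prod_left
  have hjump : ∫ t in (-1 : ℝ)..1, ∫ x, (levyKernel h z x - levyKernel h (z + t) x) ∂U =
      2 * ∫ x, Complex.exp (Complex.I * z * x) * (1 - Real.sinc x : ℝ) ∂U := by
    rw [intervalIntegral_integral_swap hint, ← integral_const_mul]
    simp_rw [integral_levyKernel_sub]
  have hpoly : ∫ t in (-1 : ℝ)..1, ((t : ℂ) * (-Complex.I * γ + (σ : ℂ) ^ 2 * z) +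
      (t ^ 2 : ℝ) * ((σ : ℂ) ^ 2 / 2)) = (σ : ℂ) ^ 2 / 3 := by
    rw [intervalIntegral.integral_add (Continuous.intervalIntegrable (by fun_prop) _ _)
        (Continuous.intervalIntegrable (by fun_prop) _ _),
      intervalIntegral.integral_mul_const, intervalIntegral.integral_mul_const,
      intervalIntegral.integral_ofReal, intervalIntegral.integral_ofReal, integral_id, integral_pow]
    norm_num
  simp_rw [levyCumulant_sub hh hU]
  rw [intervalIntegral.integral_add (Continuous.intervalIntegrable (by fun_prop) _ _) houter,
    hpoly, hjump, add_comm]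

end LevyKernel

lemma ite_eq_one_sub_sinc (x : ℝ) :
    (if x = 0 then 0 else (x - Real.sin x) / x) = 1 - Real.sinc x := by
  rcases eq_or_ne x 0 with rfl | hx
  · simp
  · rw [if_neg hx, Real.sinc_of_ne_zero hx, sub_div, div_self hx]

theorem statement1_general (U : Measure ℝ) (hU0 : U {0} = 0)
    (hUfin : ∫⁻ x, ENNReal.ofReal (min 1 (x ^ 2)) ∂U < ⊤)
    (h : ℝ → ℝ) (hh : IsTruncationFunction h) (γ σ : ℝ)
    (ψ : ℝ → ℂ) (hψ : ∀ z, ψ z = levyCumulant γ σ U h z)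
    (ρhat : ℝ → ℂ)
    (hρ : ∀ z, ρhat z = (∫ t in (-1 : ℝ)..1, (ψ z - ψ (z + t))) - (σ : ℂ) ^ 2 / 3)
    (a b : ℝ) (hab : a ≤ b) (ha : U {a} = 0) (hb : U {b} = 0) :
    ∃ L : ℂ,
      Tendsto
        (fun R : ℝ ↦ ∫ z in (-R)..R,
          ρhat z * ∫ x in a..b, Complex.exp (-(Complex.I * (z : ℂ) * (x : ℂ)))) atTop (𝓝 L) ∧
      ((∫ x in Icc a b, (if x = 0 then 0 else (x - Real.sin x) / x) ∂U : ℝ) : ℂ) =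
        1 / (4 * (Real.pi : ℂ)) * L := by
  have hne : ∀ᵐ x ∂U, x ≠ 0 := by simpa [ae_iff] using hU0
  have : SFinite U := sFinite_of_lintegral_ne_top (by fun_prop)
    (hne.mono fun x hx ↦ by simpa using hx) hUfin.ne
  have hU := integrable_min_one_sq hUfin
  have hρhat (z : ℝ) :
      ρhat z = 2 * ∫ x, Complex.exp (Complex.I * z * x) * (1 - Real.sinc x : ℝ) ∂U := by
    simp only [hρ, hψ, integral_levyCumulant_sub hh hU, add_sub_cancel_right]
  have hint : Integrable (fun x ↦ ((1 - Real.sinc x : ℝ) : ℂ)) U :=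
    (integrable_one_sub_sinc hU).ofReal
  have hlim := (tendsto_integral_fourier_mul hint hab ha hb).const_mul 2
  refine ⟨_, hlim.congr fun R ↦ ?_, ?_⟩
  · rw [← intervalIntegral.integral_const_mul]
    simp_rw [← mul_assoc, hρhat]
  · have hpi : (Real.pi : ℂ) ≠ 0 := by exact_mod_cast Real.pi_ne_zero
    simp_rw [ite_eq_one_sub_sinc]
    rw [integral_complex_ofReal]
    field_simp
    ring

end

/-- **inversion formula (1).** For a Lévy measure `U`, cumulant `ψ` and
`ρ̂(z) = ∫_{−1}^{1} (ψ(z) − ψ(z+λ)) dλ − σ²/3`, and `a < b` with `U({a}) = U({b}) = 0`,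
`∫_{[a,b]} ((x − sin x)/x) U(dx) = (1/(4π)) · v.p. ∫_ℝ ρ̂(z) (∫_a^b e^{−izx} dx) dz`,
the principal value being the limit of integrals over `[−R, R]` as `R → ∞`. -/
theorem statement1
    (U : Measure ℝ) (hU0 : U {0} = 0)
    (hUfin : ∫⁻ x, ENNReal.ofReal (min 1 (x ^ 2)) ∂U < ⊤)
    (h : ℝ → ℝ) (hmeas : Measurable h)
    (hbdd : ∃ C, ∀ x, |h x| ≤ C)
    (hsmall : (fun x => h x - 1) =o[nhds (0 : ℝ)] fun x => x)
    (hlarge : h =O[Filter.cocompact ℝ] fun x => x⁻¹)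
    (hxh : ∃ C, ∀ x, |x * h x| ≤ C)
    (γ σ : ℝ) (hσ : 0 ≤ σ)
    (ψ : ℝ → ℂ)
    (hψ : ∀ z : ℝ, ψ z = Complex.I * (γ : ℂ) * (z : ℂ) - (σ : ℂ) ^ 2 * (z : ℂ) ^ 2 / 2 +
      ∫ x, (Complex.exp (Complex.I * (z : ℂ) * (x : ℂ)) - 1
        - Complex.I * (z : ℂ) * (x : ℂ) * (h x : ℂ)) ∂U)
    (ρhat : ℝ → ℂ)
    (hρ : ∀ z : ℝ, ρhat z = (∫ t in (-1 : ℝ)..1, (ψ z - ψ (z + t))) - (σ : ℂ) ^ 2 / 3)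
    (a b : ℝ) (hab : a < b) (ha : U {a} = 0) (hb : U {b} = 0) :
    ∃ L : ℂ,
      Filter.Tendsto
        (fun R : ℝ => ∫ z in (-R)..R,
          ρhat z * ∫ x in a..b, Complex.exp (-(Complex.I * (z : ℂ) * (x : ℂ))))
        Filter.atTop (nhds L) ∧
      ((∫ x in Set.Icc a b, (if x = 0 then 0 else (x - Real.sin x) / x) ∂U : ℝ) : ℂ)
        = 1 / (4 * (Real.pi : ℂ)) * L :=
  statement1_general U hU0 hUfin h ⟨hmeas, hsmall.isBigO, hxh⟩ γ σ ψ hψ ρhat hρ a b hab.le ha hb
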